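/- Let K be a number field, V a finite-dimensional K-vector space equipped, for each finite place w of K, with a non-Archimedean K_w-norm ‖·‖_w on V ⊗_K K_w, and with a norm ‖·‖_∞ on the real vector space V ⊗_ℚ ℝ. Assume that Ĥ⁰_f(V̄(μ[v])) is a finitely generated ℤ-module for every μ ≥ 0 and that the sets Ĥ⁰_s(V̄(μ[v])) := {s ∈ Ĥ⁰_f(V̄(μ[v])) : ‖s ⊗ 1‖_∞ ≤ 1} are finite. Let λ ≥ 0 be a real number and let v be a finite place of K lying over the rational prime p. Then, writing ℓ̂^s(·) := log #Ĥ⁰_s(·), one has 0 ≤ ℓ̂^s(V̄(λ[v])) − ℓ̂^s(V̄) ≤ (⌈λ/(−log|p|_v)⌉ · log p + 2) · dim_ℚ V. -/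

import Mathlib

open IsDedekindDomain NumberField
open scoped TensorProduct NNReal Classical

set_option synthInstance.maxHeartbeats 1000000
set_option maxHeartbeats 1000000

/-- The normalized absolute value at a finite place `v` of a number field `K`,
extended to the `v`-adic completion `K_v`: `|α|_v = (#(𝓞 K / 𝔭_v))^(-ord_v α)`. -/
noncomputable def vabs {K : Type*} [Field K] [NumberField K]
    (v : HeightOneSpectrum (𝓞 K)) (x : v.adicCompletion K) : ℝ :=
  WithZeroMulInt.toNNReal (e := (Nat.card (𝓞 K ⧸ v.asIdeal) : ℝ≥0))
    (by
      haveI : Fintype (𝓞 K ⧸ v.asIdeal) :=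
        @Fintype.ofFinite _ (Ideal.finiteQuotientOfFreeOfNeBot _ v.ne_bot)
      haveI : Finite (𝓞 K ⧸ v.asIdeal) := Finite.of_fintype _
      exact_mod_cast Nat.card_ne_zero.mpr ⟨⟨0⟩, this⟩)
    (Valued.v x)

noncomputable instance adicSMulCommClass {K : Type*} [Field K] [NumberField K]
    (v : HeightOneSpectrum (𝓞 K)) :
    SMulCommClass K (v.adicCompletion K) (v.adicCompletion K) := Algebra.to_smulCommClass

/-- The set `Ĥ⁰_s(V̄(μ[v]))`: elements whose norm at each finite place `w ≠ v` is `≤ 1`,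
whose rescaled norm `e^{-μ}‖·‖_v` at `v` is `≤ 1`, and whose norm at infinity is `≤ 1`. -/
def H0s {K V : Type*} [Field K] [NumberField K] [AddCommGroup V] [Module K V] [Module ℚ V]
    (N : (w : HeightOneSpectrum (𝓞 K)) → ((w.adicCompletion K) ⊗[K] V) → ℝ)
    (Ninf : (ℝ ⊗[ℚ] V) → ℝ) (v : HeightOneSpectrum (𝓞 K)) (mu : ℝ) : Set V :=
  {s : V | (∀ w : HeightOneSpectrum (𝓞 K),
      (if w = v then Real.exp (-mu) * N w ((1 : w.adicCompletion K) ⊗ₜ[K] s)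
        else N w ((1 : w.adicCompletion K) ⊗ₜ[K] s)) ≤ 1) ∧
    Ninf ((1 : ℝ) ⊗ₜ[ℚ] s) ≤ 1}

/-- The set `Ĥ⁰_f(V̄(μ[v]))`. -/
def H0f {K V : Type*} [Field K] [NumberField K] [AddCommGroup V] [Module K V]
    (N : (w : HeightOneSpectrum (𝓞 K)) → ((w.adicCompletion K) ⊗[K] V) → ℝ)
    (v : HeightOneSpectrum (𝓞 K)) (mu : ℝ) : Set V :=
  {s : V | ∀ w : HeightOneSpectrum (𝓞 K),
      (if w = v then Real.exp (-mu) * N w ((1 : w.adicCompletion K) ⊗ₜ[K] s)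
        else N w ((1 : w.adicCompletion K) ⊗ₜ[K] s)) ≤ 1}

/-!
Let `M = Ĥ⁰_f(V̄(λ[v]))` and `A = Ĥ⁰_s(V̄(λ[v]))`, and let `q` be the power of `p` with exponent
`⌈λ / (-log |p|_v)⌉`, so that `|q|_v ≤ e^{-λ}`. Then `A` is a finite symmetric subset of the lattice
`M`, hence `#A ≤ (M : 2qM) · #((A + A) ∩ 2qM)`, and the index is `(2q)^(rank M)`. An element of
`(A + A) ∩ 2qM` has the form `2 • (q • m)` with `m ∈ M`: multiplication by `q` takes `M` into
`Ĥ⁰_f(V̄)`, and `‖2 • (q • m)‖_∞ ≤ 2` gives `‖q • m‖_∞ ≤ 1`. So `(A + A) ∩ 2qM` is contained in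
`2 • Ĥ⁰_s(V̄)`.
-/

section Lattice

open scoped Pointwise

variable {G : Type*} [AddCommGroup G]

theorem ncard_le_pow_finrank_mul_ncard_add_inter_range [Module.Free ℤ G] [Module.Finite ℤ G]
    {A : Set G} (hA : A.Finite) (hneg : -A = A) (k : ℕ) [NeZero k] :
    A.ncard ≤ k ^ Module.finrank ℤ G * ((A + A) ∩ Set.range (k • · : G → G)).ncard := by
  lift A to Finset G using hA
  let H : AddSubgroup G := (LinearMap.range (LinearMap.lsmul ℤ G k)).toAddSubgroup
  have hindex : (A.image (QuotientAddGroup.mk' H)).card ≤ k ^ Module.finrank ℤ G := by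
    rw [← ModN.natCard_eq G k, ← Nat.card_eq_finsetCard]
    exact Finite.card_subtype_le (α := ModN G k) _
  have hinter : ({x ∈ 2 • A | x ∈ H} : Finset G) = (A + A : Set G) ∩ Set.range (k • · : G → G) := by
    ext x
    simp [H, two_nsmul, ← Finset.coe_add]
  rw [← hinter, Set.ncard_coe_finset, Set.ncard_coe_finset]
  exact (Finset.le_card_quotient_add_sq_inter_addSubgroup (mod_cast hneg)).trans
    (Nat.mul_le_mul_right _ hindex)

-- `kM` is written as an image: for a natural number `k`, `k • S` is the `k`-fold sum `S + ⋯ + S`.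
theorem ncard_le_pow_finrank_mul_ncard_add_inter_image_nsmul [IsAddTorsionFree G]
    {M : Submodule ℤ G} (hM : M.FG) {A : Set G} (hA : A.Finite) (hAM : A ⊆ M) (hneg : -A = A)
    (k : ℕ) [NeZero k] :
    A.ncard ≤ k ^ Module.finrank ℤ M * ((A + A) ∩ (k • ·) '' (M : Set G)).ncard := by
  have : Module.Finite ℤ M := Module.Finite.iff_fg.mpr hM
  obtain ⟨B, rfl⟩ : ∃ B : Set M, ((↑) : M → G) '' B = A :=
    Set.subset_range_iff_exists_image_eq.1 (by simpa using hAM)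
  have hinj : Function.Injective ((↑) : M → G) := Subtype.val_injective
  have hnegB : -B = B := by
    apply hinj.image_injective
    rw [← hneg]
    exact Set.image_neg M.subtype.toAddMonoidHom B
  have hinter : ((↑) : M → G) '' ((B + B) ∩ Set.range (k • · : M → M)) =
      ((↑) '' B + (↑) '' B) ∩ (k • ·) '' (M : Set G) := by
    have hadd : ((↑) : M → G) '' (B + B) = (↑) '' B + (↑) '' B := Set.image_add M.subtype
    have hsmul : ((↑) : M → G) '' Set.range (k • · : M → M) = (k • ·) '' (M : Set G) := by
      rw [← Set.range_comp, ← Subtype.range_coe (s := (M : Set G)), ← Set.range_comp]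
      rfl
    rw [Set.image_inter hinj, hadd, hsmul]
  rw [← hinter, Set.ncard_image_of_injective _ hinj, Set.ncard_image_of_injective _ hinj]
  exact ncard_le_pow_finrank_mul_ncard_add_inter_range (hA.of_finite_image hinj.injOn) hnegB k

theorem finrank_int_le_finrank_rat [Module ℚ G] [FiniteDimensional ℚ G] (M : Submodule ℤ G) :
    Module.finrank ℤ M ≤ Module.finrank ℚ G := by
  have hrank : Module.rank ℤ M ≤ Module.rank ℚ G :=
    M.rank_le.trans_eq (IsFractionRing.rank_right_eq ℤ ℚ G).symm
  exact Cardinal.toNat_le_toNat hrank (Module.rank_lt_aleph0 ℚ G)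

end Lattice

theorem pow_natCeil_div_neg_log_le_exp_neg {a : ℝ} (h0 : 0 < a) (h1 : a < 1) (t : ℝ) :
    a ^ ⌈t / -Real.log a⌉₊ ≤ Real.exp (-t) := by
  have hlog : 0 < -Real.log a := neg_pos.2 (Real.log_neg h0 h1)
  have hceil : t ≤ ⌈t / -Real.log a⌉₊ * -Real.log a := (div_le_iff₀ hlog).1 (Nat.le_ceil _)
  rw [← Real.log_le_iff_le_exp (pow_pos h0 _), Real.log_pow]
  linarith

theorem log_sub_log_le_of_le_pow_mul {a b n k r : ℕ} (ha : 0 < a) (hn : n ≠ 0)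
    (h : a ≤ (2 * n ^ k) ^ r * b) :
    Real.log a - Real.log b ≤ (k * Real.log n + Real.log 2) * r := by
  have hpow : (n : ℝ) ^ k ≠ 0 := pow_ne_zero k (Nat.cast_ne_zero.2 hn)
  have hb : (b : ℝ) ≠ 0 := Nat.cast_ne_zero.2 (pos_of_mul_pos_right (ha.trans_le h) zero_le).ne'
  have hlog : Real.log a ≤ Real.log ((2 * n ^ k) ^ r * b) :=
    Real.log_le_log (Nat.cast_pos.2 ha) (mod_cast h)
  rw [Real.log_mul (pow_ne_zero r (mul_ne_zero two_ne_zero hpow)) hb, Real.log_pow,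
    Real.log_mul two_ne_zero hpow, Real.log_pow] at hlog
  linarith

section AbsoluteValue

variable {K : Type*} [Field K] [NumberField K] (v : HeightOneSpectrum (𝓞 K))

theorem one_lt_natCard_quotient : (1 : ℝ≥0) < Nat.card (𝓞 K ⧸ v.asIdeal) := by
  have : Finite (𝓞 K ⧸ v.asIdeal) := Ideal.finiteQuotientOfFreeOfNeBot _ v.ne_bot
  have : Nontrivial (𝓞 K ⧸ v.asIdeal) := Ideal.Quotient.nontrivial_iff.2 v.isPrime.ne_top
  exact_mod_cast Finite.one_lt_card

variable {v}

theorem vabs_le_one_iff {x : v.adicCompletion K} : vabs v x ≤ 1 ↔ Valued.v x ≤ 1 :=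
  NNReal.coe_le_one.trans (WithZeroMulInt.toNNReal_le_one_iff (one_lt_natCard_quotient v))

theorem vabs_lt_one_iff {x : v.adicCompletion K} : vabs v x < 1 ↔ Valued.v x < 1 :=
  NNReal.coe_lt_one.trans (WithZeroMulInt.toNNReal_lt_one_iff (one_lt_natCard_quotient v))

theorem vabs_nonneg (x : v.adicCompletion K) : 0 ≤ vabs v x :=
  NNReal.coe_nonneg _

theorem vabs_pos {x : v.adicCompletion K} (hx : x ≠ 0) : 0 < vabs v x :=
  NNReal.coe_pos.2 <| WithZeroMulInt.toNNReal_pos (one_lt_natCard_quotient v).ne_bot <|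
    (Valuation.ne_zero_iff _).2 hx

theorem vabs_pow (x : v.adicCompletion K) (n : ℕ) : vabs v (x ^ n) = vabs v x ^ n := by
  simp only [vabs, map_pow, NNReal.coe_pow]

theorem valued_natCast (n : ℕ) :
    Valued.v (n : v.adicCompletion K) = v.valuation K (algebraMap (𝓞 K) K n) := by
  rw [← v.valuedAdicCompletion_eq_valuation]
  congr 1
  exact (map_natCast (algebraMap (𝓞 K) (v.adicCompletion K)) n).symm

theorem vabs_natCast_le_one (n : ℕ) : vabs v (n : v.adicCompletion K) ≤ 1 := by
  rw [vabs_le_one_iff, valued_natCast]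
  exact v.valuation_le_one n

theorem vabs_natCast_lt_one {n : ℕ} (hn : (n : 𝓞 K) ∈ v.asIdeal) :
    vabs v (n : v.adicCompletion K) < 1 := by
  rw [vabs_lt_one_iff, valued_natCast]
  exact (v.valuation_lt_one_iff_mem _).2 hn

theorem div_neg_log_vabs_natCast_nonneg {t : ℝ} (ht : 0 ≤ t) (n : ℕ) :
    0 ≤ t / -Real.log (vabs v (n : v.adicCompletion K)) :=
  div_nonneg ht <| neg_nonneg.2 <| Real.log_nonpos (vabs_nonneg _) (vabs_natCast_le_one n)

theorem vabs_natCast_pow_natCeil_le_exp_neg {n : ℕ} (hn0 : n ≠ 0) (hn : (n : 𝓞 K) ∈ v.asIdeal)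
    (t : ℝ) :
    vabs v ((n ^ ⌈t / -Real.log (vabs v (n : v.adicCompletion K))⌉₊ : ℕ) : v.adicCompletion K) ≤
      Real.exp (-t) := by
  have : CharZero (v.adicCompletion K) := charZero_of_injective_algebraMap
    (algebraMap K (v.adicCompletion K)).injective
  rw [Nat.cast_pow, vabs_pow]
  exact pow_natCeil_div_neg_log_le_exp_neg (vabs_pos (Nat.cast_ne_zero.2 hn0))
    (vabs_natCast_lt_one hn) t

end AbsoluteValue

section SmallSections

open scoped Pointwise

variable {K V : Type*} [Field K] [NumberField K] [AddCommGroup V] [Module K V]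
  {N : (w : HeightOneSpectrum (𝓞 K)) → ((w.adicCompletion K) ⊗[K] V) → ℝ}
  {v : HeightOneSpectrum (𝓞 K)} {mu nu : ℝ}

theorem apply_one_tmul_nsmul {w : HeightOneSpectrum (𝓞 K)} {f : (w.adicCompletion K) ⊗[K] V → ℝ}
    (hf : ∀ (a : w.adicCompletion K) x, f (a • x) = vabs w a * f x) (n : ℕ) (s : V) :
    f (1 ⊗ₜ[K] (n • s)) = vabs w n * f (1 ⊗ₜ[K] s) := by
  rw [← hf, TensorProduct.tmul_smul, Nat.cast_smul_eq_nsmul]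

theorem H0f_mono (hN0 : ∀ w x, 0 ≤ N w x) (h : nu ≤ mu) : H0f N v nu ⊆ H0f N v mu := by
  intro s hs w
  refine le_trans ?_ (hs w)
  split_ifs with hw
  · exact mul_le_mul_of_nonneg_right (by gcongr) (hN0 _ _)
  · rfl

theorem nsmul_mem_H0f (hN0 : ∀ w x, 0 ≤ N w x)
    (hNsmul : ∀ w (a : w.adicCompletion K) x, N w (a • x) = vabs w a * N w x)
    {q : ℕ} (hq : vabs v q ≤ Real.exp (nu - mu)) {s : V} (hs : s ∈ H0f N v mu) :
    q • s ∈ H0f N v nu := by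
  intro w
  refine le_trans ?_ (hs w)
  rw [apply_one_tmul_nsmul (hNsmul w)]
  split_ifs with hw
  · subst hw
    calc Real.exp (-nu) * (vabs w q * N w (1 ⊗ₜ[K] s))
        ≤ Real.exp (-nu) * (Real.exp (nu - mu) * N w (1 ⊗ₜ[K] s)) := by
          gcongr
          exact hN0 _ _
      _ = Real.exp (-mu) * N w (1 ⊗ₜ[K] s) := by
          rw [← mul_assoc, ← Real.exp_add]
          ring_nf
  · exact mul_le_of_le_one_left (hN0 _ _) (vabs_natCast_le_one q)

variable [Module ℚ V]

theorem H0s_zero (Ninf : (ℝ ⊗[ℚ] V) → ℝ) :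
    H0s N Ninf v 0 = {s : V | (∀ w : HeightOneSpectrum (𝓞 K),
      N w ((1 : w.adicCompletion K) ⊗ₜ[K] s) ≤ 1) ∧ Ninf ((1 : ℝ) ⊗ₜ[ℚ] s) ≤ 1} := by
  simp only [H0s, neg_zero, Real.exp_zero, one_mul, ite_self]

variable {Ninf : Seminorm ℝ (ℝ ⊗[ℚ] V)}

theorem H0s_mono (hN0 : ∀ w x, 0 ≤ N w x) (h : nu ≤ mu) : H0s N Ninf v nu ⊆ H0s N Ninf v mu :=
  fun _ hs ↦ ⟨H0f_mono hN0 h hs.1, hs.2⟩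

theorem zero_mem_H0s {M : Submodule ℤ V} (hM : (M : Set V) = H0f N v mu) :
    (0 : V) ∈ H0s N Ninf v mu :=
  ⟨hM.subset M.zero_mem, by simp only [TensorProduct.tmul_zero, map_zero, zero_le_one]⟩

theorem neg_H0s {M : Submodule ℤ V} (hM : (M : Set V) = H0f N v mu) :
    -H0s N Ninf v mu = H0s N Ninf v mu := by
  have hneg : ∀ s ∈ H0s N Ninf v mu, -s ∈ H0s N Ninf v mu := fun s hs ↦
    ⟨hM.subset (M.neg_mem (hM.superset hs.1)), by
      rw [TensorProduct.tmul_neg, map_neg_eq_map]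
      exact hs.2⟩
  exact Set.Subset.antisymm (fun s hs ↦ neg_neg s ▸ hneg _ hs) hneg

theorem H0s_add_H0s_inter_subset (hN0 : ∀ w x, 0 ≤ N w x)
    (hNsmul : ∀ w (a : w.adicCompletion K) x, N w (a • x) = vabs w a * N w x)
    {q : ℕ} (hq : vabs v q ≤ Real.exp (nu - mu)) :
    (H0s N Ninf v mu + H0s N Ninf v mu) ∩ ((2 * q) • ·) '' H0f N v mu ⊆
      (2 • ·) '' H0s N Ninf v nu := by
  rintro _ ⟨⟨x, hx, y, hy, hxy⟩, m, hm, rfl⟩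
  simp only [mul_smul] at hxy ⊢
  refine Set.mem_image_of_mem _ ⟨nsmul_mem_H0f hN0 hNsmul hq hm, ?_⟩
  have htwo : 2 * Ninf (1 ⊗ₜ[ℚ] (q • m)) ≤ 2 :=
    calc 2 * Ninf (1 ⊗ₜ[ℚ] (q • m)) = Ninf (1 ⊗ₜ[ℚ] (x + y)) := by
          rw [hxy, two_nsmul, TensorProduct.tmul_add, ← two_smul ℝ, map_smul_eq_mul,
            Real.norm_ofNat]
      _ ≤ Ninf (1 ⊗ₜ[ℚ] x) + Ninf (1 ⊗ₜ[ℚ] y) := by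
          rw [TensorProduct.tmul_add]
          exact map_add_le_add Ninf _ _
      _ ≤ 2 := by linarith [hx.2, hy.2]
  linarith

theorem ncard_H0s_le (hN0 : ∀ w x, 0 ≤ N w x)
    (hNsmul : ∀ w (a : w.adicCompletion K) x, N w (a • x) = vabs w a * N w x)
    {M : Submodule ℤ V} (hM : (M : Set V) = H0f N v mu) (hMfg : M.FG)
    (hfin : (H0s N Ninf v mu).Finite) (hle : nu ≤ mu)
    {q : ℕ} (hq0 : q ≠ 0) (hq : vabs v q ≤ Real.exp (nu - mu)) :
    (H0s N Ninf v mu).ncard ≤ (2 * q) ^ Module.finrank ℤ M * (H0s N Ninf v nu).ncard := by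
  have : IsAddTorsionFree V := IsAddTorsionFree.of_module_rat V
  have : NeZero (2 * q) := ⟨mul_ne_zero two_ne_zero hq0⟩
  have hfin' : (H0s N Ninf v nu).Finite := hfin.subset (H0s_mono hN0 hle)
  calc (H0s N Ninf v mu).ncard
      ≤ (2 * q) ^ Module.finrank ℤ M *
          ((H0s N Ninf v mu + H0s N Ninf v mu) ∩ ((2 * q) • ·) '' (M : Set V)).ncard :=
        ncard_le_pow_finrank_mul_ncard_add_inter_image_nsmul hMfg hfin (fun _ hs ↦ hM.superset hs.1)
          (neg_H0s hM) (2 * q)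
    _ ≤ (2 * q) ^ Module.finrank ℤ M * ((2 • ·) '' H0s N Ninf v nu).ncard := by
        rw [hM]
        gcongr
        · exact hfin'.image _
        · exact H0s_add_H0s_inter_subset hN0 hNsmul hq
    _ ≤ (2 * q) ^ Module.finrank ℤ M * (H0s N Ninf v nu).ncard :=
        Nat.mul_le_mul_left _ (Set.ncard_image_le hfin')

end SmallSections

theorem stmt2_general {K V : Type*} [Field K] [NumberField K]
    [AddCommGroup V] [Module K V] [Module ℚ V]
    (N : (w : HeightOneSpectrum (𝓞 K)) → ((w.adicCompletion K) ⊗[K] V) → ℝ)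
    (hN0 : ∀ w x, 0 ≤ N w x)
    (hNsmul : ∀ (w : HeightOneSpectrum (𝓞 K)) (a : w.adicCompletion K)
      (x : (w.adicCompletion K) ⊗[K] V), N w (a • x) = vabs w a * N w x)
    (Ninf : Seminorm ℝ (ℝ ⊗[ℚ] V)) {lam : ℝ} (hlam : 0 ≤ lam) {n : ℕ} (hn0 : n ≠ 0)
    {v : HeightOneSpectrum (𝓞 K)} (hn : (n : 𝓞 K) ∈ v.asIdeal)
    {M : Submodule ℤ V} (hM : (M : Set V) = H0f N v lam) (hMfg : M.FG)
    (hfin : (H0s N Ninf v lam).Finite) :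
    0 ≤ Real.log (Nat.card (H0s N Ninf v lam)) - Real.log (Nat.card (H0s N Ninf v 0)) ∧
      Real.log (Nat.card (H0s N Ninf v lam)) - Real.log (Nat.card (H0s N Ninf v 0)) ≤
        (⌈lam / (-Real.log (vabs v (n : v.adicCompletion K)))⌉ * Real.log n + Real.log 2) *
          Module.finrank ℤ M := by
  simp only [Nat.card_coe_set_eq]
  have hcount := ncard_H0s_le hN0 hNsmul hM hMfg hfin hlam (pow_ne_zero _ hn0)
    ((vabs_natCast_pow_natCeil_le_exp_neg hn0 hn lam).trans_eq (by rw [zero_sub]))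
  have hpos : 0 < (H0s N Ninf v lam).ncard := (Set.ncard_pos hfin).2 ⟨0, zero_mem_H0s hM⟩
  have hpos0 : 0 < (H0s N Ninf v 0).ncard :=
    pos_of_mul_pos_right (hpos.trans_le hcount) zero_le
  refine ⟨sub_nonneg.2 (Real.log_le_log (Nat.cast_pos.2 hpos0) ?_), ?_⟩
  · exact_mod_cast Set.ncard_le_ncard (H0s_mono hN0 hlam) hfin
  · rw [← natCast_ceil_eq_intCast_ceil (div_neg_log_vabs_natCast_nonneg hlam n)]
    exact log_sub_log_le_of_le_pow_mul hpos hn0 hcount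

/-- Lemma 3.3: `0 ≤ ℓ̂^s(V̄(λ[v])) − ℓ̂^s(V̄) ≤ (⌈λ/(−log|p|_v)⌉·log p + 2)·dim_ℚ V`. -/
theorem stmt2 {K V : Type*} [Field K] [NumberField K]
    [AddCommGroup V] [Module K V] [FiniteDimensional K V]
    [Module ℚ V] [IsScalarTower ℚ K V]
    (N : (w : HeightOneSpectrum (𝓞 K)) → ((w.adicCompletion K) ⊗[K] V) → ℝ)
    (hN0 : ∀ w x, 0 ≤ N w x)
    (hNeq : ∀ w x, N w x = 0 ↔ x = 0)
    (hNmax : ∀ w x y, N w (x + y) ≤ max (N w x) (N w y))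
    (hNsmul : ∀ (w : HeightOneSpectrum (𝓞 K)) (a : w.adicCompletion K)
      (x : (w.adicCompletion K) ⊗[K] V), N w (a • x) = vabs w a * N w x)
    (Ninf : (ℝ ⊗[ℚ] V) → ℝ)
    (hNinf0 : ∀ x, 0 ≤ Ninf x)
    (hNinfeq : ∀ x, Ninf x = 0 ↔ x = 0)
    (hNinfadd : ∀ x y, Ninf (x + y) ≤ Ninf x + Ninf y)
    (hNinfsmul : ∀ (c : ℝ) (x : ℝ ⊗[ℚ] V), Ninf (c • x) = |c| * Ninf x)
    (lam : ℝ) (hlam : 0 ≤ lam)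
    (p : ℕ) (hp : p.Prime)
    (v : HeightOneSpectrum (𝓞 K)) (hv : (p : 𝓞 K) ∈ v.asIdeal)
    (hFG : ∀ mu : ℝ, 0 ≤ mu → ∃ M : Submodule ℤ V, (M : Set V) = H0f N v mu ∧ M.FG)
    (hfin : ∀ mu : ℝ, 0 ≤ mu → (H0s N Ninf v mu).Finite) :
    0 ≤ Real.log (Nat.card (H0s N Ninf v lam)) -
        Real.log (Nat.card {s : V |
          (∀ w : HeightOneSpectrum (𝓞 K),
            N w ((1 : w.adicCompletion K) ⊗ₜ[K] s) ≤ 1) ∧ Ninf ((1 : ℝ) ⊗ₜ[ℚ] s) ≤ 1}) ∧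
      Real.log (Nat.card (H0s N Ninf v lam)) -
        Real.log (Nat.card {s : V |
          (∀ w : HeightOneSpectrum (𝓞 K),
            N w ((1 : w.adicCompletion K) ⊗ₜ[K] s) ≤ 1) ∧ Ninf ((1 : ℝ) ⊗ₜ[ℚ] s) ≤ 1}) ≤
        ((⌈lam / (-Real.log (vabs v ((p : ℕ) : v.adicCompletion K)))⌉ : ℝ) * Real.log p + 2) *
          (Module.finrank ℚ V : ℝ) := by
  obtain ⟨M, hM, hMfg⟩ := hFG lam hlam
  have : FiniteDimensional ℚ V := Module.Finite.trans K V
  have hceil := Int.ceil_nonneg (div_neg_log_vabs_natCast_nonneg (v := v) hlam p)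
  obtain ⟨hlower, hupper⟩ := stmt2_general N hN0 hNsmul (Seminorm.of Ninf hNinfadd hNinfsmul) hlam
    hp.ne_zero hv hM hMfg (hfin lam hlam)
  rw [← H0s_zero]
  refine ⟨hlower, hupper.trans ?_⟩
  gcongr
  · exact Real.log_le_self zero_le_two
  · exact finrank_int_le_finrank_rat M
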